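/- arXiv:1405.2786 — 5 statements merged into one kernel-verified Lean document; each statement's English description precedes it below -/
import Mathlib

section
/- Let X ∈ ℂ^{T×M} satisfy the RIP of order k with constant δ_k ∈ [0,1). If J₁, J₂ ⊆ {1,…,M} are disjoint index sets with |J₁ ∪ J₂| ≤ k, then the spectral norm of (X_{J₂})^H X_{J₁} satisfies ‖(X_{J₂})^H X_{J₁}‖ ≤ δ_k. -/
open Matrix

/-- `X` satisfies the restricted isometry property (RIP) of order `k` with
constant `δ ∈ [0,1)`: for every `k`-sparse vector `h`,
`(1−δ)‖h‖² ≤ ‖Xh‖² ≤ (1+δ)‖h‖²` (Euclidean norms). -/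
def RIP {T M : ℕ} (X : Matrix (Fin T) (Fin M) ℂ) (k : ℕ) (δ : ℝ) : Prop :=
  0 ≤ δ ∧ δ < 1 ∧
    ∀ h : Fin M → ℂ, (Finset.univ.filter fun i => h i ≠ 0).card ≤ k →
      (1 - δ) * ∑ i, ‖h i‖ ^ 2 ≤ ∑ j, ‖X.mulVec h j‖ ^ 2 ∧
        ∑ j, ‖X.mulVec h j‖ ^ 2 ≤ (1 + δ) * ∑ i, ‖h i‖ ^ 2

/-- Spectral norm (largest singular value) of a complex matrix, realized as the
operator norm of the induced linear map between Euclidean spaces. -/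
noncomputable def specNorm {m n : Type*} [Fintype m] [Fintype n] [DecidableEq n]
    (A : Matrix m n ℂ) : ℝ :=
  ‖LinearMap.toContinuousLinearMap (Matrix.toEuclideanLin A)‖

/-- Submatrix of `X` formed by the columns indexed by the set `J`. -/
def cols {T M : ℕ} (X : Matrix (Fin T) (Fin M) ℂ) (J : Finset (Fin M)) :
    Matrix (Fin T) J ℂ :=
  X.submatrix id (fun j => (j : Fin M))

/-!
For orthogonal unit vectors `x` and `y` we have `‖x + y‖² = ‖x - y‖² = 2`, so if `X` changes squared
norms by a relative error of at most `δ`, polarization gives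
`4 re ⟪X x, X y⟫ = ‖X (x + y)‖² - ‖X (x - y)‖² ≤ 2 (1 + δ) - 2 (1 - δ) = 4 δ`.
Taking for `x` and `y` the zero extensions of unit vectors supported on the two disjoint index sets
bounds the sesquilinear form of `X_{J₂}ᴴ X_{J₁}` on unit vectors, hence its norm, by `δ`.
-/

open scoped InnerProductSpace

section Polarization

variable {𝕜 E F G : Type*} [RCLike 𝕜]
  [SeminormedAddCommGroup E] [InnerProductSpace 𝕜 E]
  [SeminormedAddCommGroup F] [InnerProductSpace 𝕜 F]
  [FunLike G E F] [AddMonoidHomClass G E F]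

theorem re_inner_map_map_le_of_re_inner_eq_zero (A : G) {δ : ℝ} {x y : E}
    (horth : RCLike.re ⟪x, y⟫_𝕜 = 0)
    (hadd : ‖A (x + y)‖ ^ 2 ≤ (1 + δ) * ‖x + y‖ ^ 2)
    (hsub : (1 - δ) * ‖x - y‖ ^ 2 ≤ ‖A (x - y)‖ ^ 2) :
    RCLike.re ⟪A x, A y⟫_𝕜 ≤ δ * ((‖x‖ ^ 2 + ‖y‖ ^ 2) / 2) := by
  have hnorm_add : ‖x + y‖ ^ 2 = ‖x‖ ^ 2 + ‖y‖ ^ 2 := by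
    rw [norm_add_sq (𝕜 := 𝕜), horth]; ring
  have hnorm_sub : ‖x - y‖ ^ 2 = ‖x‖ ^ 2 + ‖y‖ ^ 2 := by
    rw [norm_sub_sq (𝕜 := 𝕜), horth]; ring
  rw [hnorm_add, map_add, norm_add_sq (𝕜 := 𝕜)] at hadd
  rw [hnorm_sub, map_sub, norm_sub_sq (𝕜 := 𝕜)] at hsub
  linarith

end Polarization

section ZeroExtension

variable {ι κ κ' : Type*} [Fintype ι]

theorem mulVec_extend_zero {R m : Type*} [NonUnitalNonAssocSemiring R] [Fintype κ]
    (X : Matrix m ι R) {e : κ → ι} (he : e.Injective) (u : κ → R) :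
    X *ᵥ Function.extend e u 0 = X.submatrix id e *ᵥ u := by
  ext j
  refine (Fintype.sum_of_injective e he _ _ (fun i hi => ?_) fun i => ?_).symm
  · simp [Function.extend_apply' u (0 : ι → R) i hi]
  · simp [he.extend_apply]

variable {𝕜 : Type*} [RCLike 𝕜]

theorem norm_toLp_extend_zero [Fintype κ] {e : κ → ι} (he : e.Injective) (u : κ → 𝕜) :
    ‖WithLp.toLp 2 (Function.extend e u 0)‖ = ‖WithLp.toLp 2 u‖ := by
  simp only [EuclideanSpace.norm_eq]
  congr 1
  refine (Fintype.sum_of_injective e he _ _ (fun i hi => ?_) fun i => ?_).symm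
  · simp [Function.extend_apply' u (0 : ι → 𝕜) i hi]
  · simp [he.extend_apply]

theorem inner_toLp_extend_zero_eq_zero_of_disjoint_range {e : κ → ι} {e' : κ' → ι}
    (h : Disjoint (Set.range e) (Set.range e')) (u : κ → 𝕜) (v : κ' → 𝕜) :
    ⟪WithLp.toLp 2 (Function.extend e u 0), WithLp.toLp 2 (Function.extend e' v 0)⟫_𝕜 = 0 := by
  refine Finset.sum_eq_zero fun i _ => ?_
  by_cases hi : i ∈ Set.range e
  · simp [Function.extend_apply' v (0 : ι → 𝕜) i (Set.disjoint_left.mp h hi)]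
  · simp [Function.extend_apply' u (0 : ι → 𝕜) i hi]

end ZeroExtension

section MatrixNorm

variable {𝕜 m n : Type*} [RCLike 𝕜] [Fintype m] [Fintype n]

theorem inner_toLp_conjTranspose_mulVec (B : Matrix m n 𝕜) (w : m → 𝕜) (v : n → 𝕜) :
    ⟪WithLp.toLp 2 (Bᴴ *ᵥ w), WithLp.toLp 2 v⟫_𝕜 = ⟪WithLp.toLp 2 w, WithLp.toLp 2 (B *ᵥ v)⟫_𝕜 := by
  rw [EuclideanSpace.inner_toLp_toLp, EuclideanSpace.inner_toLp_toLp, star_mulVec,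
    conjTranspose_conjTranspose, dotProduct_comm, ← dotProduct_mulVec, dotProduct_comm]

variable [DecidableEq n]

open scoped Matrix.Norms.L2Operator

theorem l2_opNorm_conjTranspose_mul_le_of_re_inner_le {l : Type*} [Fintype l] (B : Matrix m l 𝕜)
    (A : Matrix m n 𝕜) {C : ℝ} (hC : 0 ≤ C)
    (h : ∀ (u : n → 𝕜) (v : l → 𝕜), ‖WithLp.toLp 2 u‖ = 1 → ‖WithLp.toLp 2 v‖ = 1 →
      RCLike.re ⟪WithLp.toLp 2 (A *ᵥ u), WithLp.toLp 2 (B *ᵥ v)⟫_𝕜 ≤ C) :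
    ‖Bᴴ * A‖ ≤ C := by
  rw [l2_opNorm_def]
  refine ContinuousLinearMap.opNorm_le_of_re_inner_le (𝕜 := 𝕜) hC fun u v hu hv => ?_
  change RCLike.re ⟪WithLp.toLp 2 ((Bᴴ * A) *ᵥ u.ofLp), WithLp.toLp 2 v.ofLp⟫_𝕜 ≤ C
  rw [← mulVec_mulVec, inner_toLp_conjTranspose_mulVec]
  exact h u.ofLp v.ofLp hu hv

theorem specNorm_conjTranspose_mul_le_of_disjoint_general (X : Matrix m n 𝕜) {δ : ℝ} (hδ : 0 ≤ δ)
    {J₁ J₂ : Finset n} (hdisj : Disjoint J₁ J₂)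
    (hX : ∀ h : n → 𝕜, (∀ i ∉ J₁ ∪ J₂, h i = 0) →
      (1 - δ) * ‖WithLp.toLp 2 h‖ ^ 2 ≤ ‖WithLp.toLp 2 (X *ᵥ h)‖ ^ 2 ∧
        ‖WithLp.toLp 2 (X *ᵥ h)‖ ^ 2 ≤ (1 + δ) * ‖WithLp.toLp 2 h‖ ^ 2) :
    ‖(X.submatrix id ((↑) : J₂ → n))ᴴ * X.submatrix id ((↑) : J₁ → n)‖ ≤ δ := by
  refine l2_opNorm_conjTranspose_mul_le_of_re_inner_le _ _ hδ fun u v hu hv => ?_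
  rw [← mulVec_extend_zero X Subtype.val_injective, ← mulVec_extend_zero X Subtype.val_injective]
  rw [← norm_toLp_extend_zero Subtype.val_injective] at hu hv
  set x : n → 𝕜 := Function.extend ((↑) : J₁ → n) u 0
  set y : n → 𝕜 := Function.extend ((↑) : J₂ → n) v 0
  have hx : ∀ i ∉ J₁ ∪ J₂, x i = 0 := fun i hi =>
    Function.extend_apply' _ _ i (by rintro ⟨j, rfl⟩; simp at hi)
  have hy : ∀ i ∉ J₁ ∪ J₂, y i = 0 := fun i hi =>
    Function.extend_apply' _ _ i (by rintro ⟨j, rfl⟩; simp at hi)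
  have horth : ⟪WithLp.toLp 2 x, WithLp.toLp 2 y⟫_𝕜 = 0 :=
    inner_toLp_extend_zero_eq_zero_of_disjoint_range (by simpa using hdisj) u v
  have hbound : RCLike.re ⟪toEuclideanLin X (WithLp.toLp 2 x), toEuclideanLin X (WithLp.toLp 2 y)⟫_𝕜
      ≤ δ * ((‖WithLp.toLp 2 x‖ ^ 2 + ‖WithLp.toLp 2 y‖ ^ 2) / 2) := by
    apply re_inner_map_map_le_of_re_inner_eq_zero (𝕜 := 𝕜)
    · rw [horth, map_zero]
    · simpa only [← WithLp.toLp_add, toLpLin_toLp, toLin'_apply]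
        using (hX (x + y) fun i hi => by simp [hx i hi, hy i hi]).2
    · simpa only [← WithLp.toLp_sub, toLpLin_toLp, toLin'_apply]
        using (hX (x - y) fun i hi => by simp [hx i hi, hy i hi]).1
  simpa only [toLpLin_toLp, toLin'_apply, hu, hv, one_pow, add_self_div_two, mul_one] using hbound

end MatrixNorm

theorem RIP.norm_toLp_mulVec_sq_bounds {T M : ℕ} {X : Matrix (Fin T) (Fin M) ℂ} {k : ℕ} {δ : ℝ}
    (hX : RIP X k δ) {J : Finset (Fin M)} (hJ : J.card ≤ k) (h : Fin M → ℂ)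
    (hsupp : ∀ i ∉ J, h i = 0) :
    (1 - δ) * ‖WithLp.toLp 2 h‖ ^ 2 ≤ ‖WithLp.toLp 2 (X *ᵥ h)‖ ^ 2 ∧
      ‖WithLp.toLp 2 (X *ᵥ h)‖ ^ 2 ≤ (1 + δ) * ‖WithLp.toLp 2 h‖ ^ 2 := by
  have hsubset : (Finset.univ.filter fun i => h i ≠ 0) ⊆ J := fun i hi =>
    not_imp_comm.mp (hsupp i) (Finset.mem_filter.mp hi).2
  simpa only [EuclideanSpace.norm_sq_eq] using hX.2.2 h ((Finset.card_le_card hsubset).trans hJ)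

/-- Lemma 7, inequality (property3): if `X` satisfies the RIP of order `k` with
constant `δ_k` and `J₁, J₂` are disjoint with `|J₁ ∪ J₂| ≤ k`, then
`‖(X_{J₂})ᴴ X_{J₁}‖ ≤ δ_k`. -/
theorem specNorm_conjTranspose_mul_le_of_disjoint
    {T M : ℕ} (X : Matrix (Fin T) (Fin M) ℂ) (k : ℕ) (δ : ℝ) (hX : RIP X k δ)
    (J₁ J₂ : Finset (Fin M)) (hdisj : Disjoint J₁ J₂) (hcard : (J₁ ∪ J₂).card ≤ k) :
    specNorm ((cols X J₂)ᴴ * cols X J₁) ≤ δ :=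
  specNorm_conjTranspose_mul_le_of_disjoint_general X hX.1 hdisj
    (hX.norm_toLp_mulVec_sq_bounds hcard)
end

section
/- Let χ_{2k} be a random variable with chi-squared distribution with 2k degrees of freedom (k a positive integer). Then for every real x with 0 < x < 1, Pr(χ_{2k} ≤ 2xk) ≤ exp(−k(x − 1 − ln x)). -/
open MeasureTheory ProbabilityTheory

/-! The exponential tilt `y ↦ exp (t * y)` turns the gamma density of rate `r` into a multiple of
the gamma density of rate `r - t`. As the latter has total mass one, the moment generating function
is `(r / (r - t)) ^ a`, and the tail bound is Chernoff's inequality at the tilt for which the new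
mean `a / (r - t)` is the threshold `x * (a / r)`. -/

section GammaMoments

variable {a r t : ℝ}

lemma exp_mul_gammaPDFReal (hr : 0 < r) (ht : t < r) (a y : ℝ) :
    Real.exp (t * y) * gammaPDFReal a r y = (r / (r - t)) ^ a * gammaPDFReal a (r - t) y := by
  have hrt : 0 < r - t := sub_pos.mpr ht
  have hrate : r ^ a = (r / (r - t)) ^ a * (r - t) ^ a := by
    rw [← Real.mul_rpow (by positivity) hrt.le, div_mul_cancel₀ r hrt.ne']
  have hexp : Real.exp (-((r - t) * y)) = Real.exp (t * y) * Real.exp (-(r * y)) := by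
    rw [← Real.exp_add]
    ring_nf
  unfold gammaPDFReal
  split_ifs
  · rw [hrate, hexp]
    ring
  · simp

lemma lintegral_exp_mul_gammaMeasure (ha : 0 < a) (hr : 0 < r) (ht : t < r) :
    ∫⁻ y, ENNReal.ofReal (Real.exp (t * y)) ∂gammaMeasure a r =
      ENNReal.ofReal ((r / (r - t)) ^ a) := by
  have hrt : 0 < r - t := sub_pos.mpr ht
  have hpdf : Measurable (gammaPDF a r) := (measurable_gammaPDFReal a r).ennreal_ofReal
  have htilt (y : ℝ) : gammaPDF a r y * ENNReal.ofReal (Real.exp (t * y)) =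
      ENNReal.ofReal ((r / (r - t)) ^ a) * gammaPDF a (r - t) y := by
    rw [gammaPDF, gammaPDF, mul_comm, ← ENNReal.ofReal_mul (by positivity),
      ← ENNReal.ofReal_mul (by positivity), exp_mul_gammaPDFReal hr ht]
  calc ∫⁻ y, ENNReal.ofReal (Real.exp (t * y)) ∂gammaMeasure a r
      = ∫⁻ y, gammaPDF a r y * ENNReal.ofReal (Real.exp (t * y)) :=
        lintegral_withDensity_eq_lintegral_mul _ hpdf (by fun_prop)
    _ = ∫⁻ y, ENNReal.ofReal ((r / (r - t)) ^ a) * gammaPDF a (r - t) y :=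
        lintegral_congr htilt
    _ = ENNReal.ofReal ((r / (r - t)) ^ a) := by
        rw [lintegral_const_mul' _ _ ENNReal.ofReal_ne_top, lintegral_gammaPDF_eq_one ha hrt,
          mul_one]

lemma integrable_exp_mul_gammaMeasure (ha : 0 < a) (hr : 0 < r) (ht : t < r) :
    Integrable (fun y ↦ Real.exp (t * y)) (gammaMeasure a r) := by
  rw [← lintegral_ofReal_ne_top_iff_integrable (by fun_prop)
    (ae_of_all _ fun y ↦ (Real.exp_pos (t * y)).le), lintegral_exp_mul_gammaMeasure ha hr ht]
  exact ENNReal.ofReal_ne_top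

lemma mgf_id_gammaMeasure (ha : 0 < a) (hr : 0 < r) (ht : t < r) :
    mgf id (gammaMeasure a r) t = (r / (r - t)) ^ a := by
  simp only [mgf, id]
  rw [integral_eq_lintegral_of_nonneg_ae (ae_of_all _ fun y ↦ (Real.exp_pos (t * y)).le)
    (by fun_prop), lintegral_exp_mul_gammaMeasure ha hr ht,
    ENNReal.toReal_ofReal (Real.rpow_nonneg (div_nonneg hr.le (sub_pos.mpr ht).le) a)]

lemma gammaMeasure_real_Iic_mul_mean_le (ha : 0 < a) (hr : 0 < r) {x : ℝ} (hx0 : 0 < x)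
    (hx1 : x ≤ 1) :
    (gammaMeasure a r).real (Set.Iic (x * (a / r))) ≤
      Real.exp (-(a * (x - 1 - Real.log x))) := by
  have := isProbabilityMeasure_gammaMeasure ha hr
  -- `t = r - r / x` minimizes the Chernoff bound `exp (-t * (x * (a / r))) * (r / (r - t)) ^ a`.
  have ht_nonpos : r - r / x ≤ 0 := sub_nonpos.mpr (le_div_self hr.le hx0 hx1)
  have ht_lt : r - r / x < r := sub_lt_self r (div_pos hr hx0)
  have hratio : r / (r - (r - r / x)) = x := by
    rw [sub_sub_cancel, div_div_cancel₀ hr.ne']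
  have hexponent : -(r - r / x) * (x * (a / r)) = a * (1 - x) := by
    field_simp
    ring
  calc (gammaMeasure a r).real (Set.Iic (x * (a / r)))
      ≤ Real.exp (-(r - r / x) * (x * (a / r))) * mgf id (gammaMeasure a r) (r - r / x) :=
        measure_le_le_exp_mul_mgf (X := id) _ ht_nonpos
          (integrable_exp_mul_gammaMeasure ha hr ht_lt)
    _ = Real.exp (a * (1 - x)) * x ^ a := by
        rw [mgf_id_gammaMeasure ha hr ht_lt, hratio, hexponent]
    _ = Real.exp (-(a * (x - 1 - Real.log x))) := by
        rw [Real.rpow_def_of_pos hx0, ← Real.exp_add]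
        ring_nf

end GammaMoments

theorem chiSq_lower_tail_chernoff_general
    {Ω : Type*} [MeasurableSpace Ω] {μ : Measure Ω} {a r : ℝ} (ha : 0 < a) (hr : 0 < r)
    {T : Ω → ℝ} (hT : HasLaw T (gammaMeasure a r) μ) {x : ℝ} (hx0 : 0 < x) (hx1 : x ≤ 1) :
    μ {ω | T ω ≤ x * (a / r)} ≤ ENNReal.ofReal (Real.exp (-(a * (x - 1 - Real.log x)))) := by
  have := isProbabilityMeasure_gammaMeasure ha hr
  calc μ {ω | T ω ≤ x * (a / r)}
      = gammaMeasure a r (Set.Iic (x * (a / r))) := hT.measure_eq measurableSet_Iic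
    _ = ENNReal.ofReal ((gammaMeasure a r).real (Set.Iic (x * (a / r)))) :=
        (ofReal_measureReal (measure_ne_top _ _)).symm
    _ ≤ ENNReal.ofReal (Real.exp (-(a * (x - 1 - Real.log x)))) :=
        ENNReal.ofReal_le_ofReal (gammaMeasure_real_Iic_mul_mean_le ha hr hx0 hx1)

/-- Lemma 8 (lower-tail Chernoff bound): if `T'` is chi-squared distributed with
`2k` degrees of freedom (i.e. Gamma with shape `k` and rate `1/2`), then for
`0 < x < 1`, `Pr(T' ≤ 2xk) ≤ exp(−k(x − 1 − ln x))`. -/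
theorem chiSq_lower_tail_chernoff
    {Ω : Type*} [MeasurableSpace Ω] (μ : Measure Ω) [IsProbabilityMeasure μ]
    (k : ℕ) (hk : 0 < k) (T' : Ω → ℝ) (hT' : Measurable T')
    (hdist : μ.map T' = gammaMeasure k (1 / 2))
    (x : ℝ) (hx0 : 0 < x) (hx1 : x < 1) :
    μ {ω | T' ω ≤ 2 * x * k} ≤
      ENNReal.ofReal (Real.exp (-(k * (x - 1 - Real.log x)))) := by
  rw [show 2 * x * k = x * (k / (1 / 2)) by ring]
  exact chiSq_lower_tail_chernoff_general (Nat.cast_pos.mpr hk) one_half_pos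
    ⟨hT'.aemeasurable, hdist⟩ hx0 hx1.le
end

section
/- Let X ∈ ℂ^{T×M} satisfy the RIP of order 1 with constant δ₁ and of order s with constant δ_s, where 0 ≤ δ₁ ≤ δ_s < 1/2. Let Ω ⊆ {1,…,M} with |Ω| ≤ s, let J ⊊ Ω, and let l ∈ Ω \ J. Let P_J = X_J ((X_J)^H X_J)^{−1} (X_J)^H be the orthogonal projection onto the column span of X_J (well defined since (X_J)^H X_J is invertible). Then the spectral norm of the 1×|Ω\J| matrix X(l)^H (I − P_J) X_{Ω\J} satisfies ‖X(l)^H (I − P_J) X_{Ω\J}‖ ≥ (1 − 2δ_s)/(1 − δ_s). -/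
open Matrix

/-- The `l`-th column of `X`, viewed as a `T × 1` matrix. -/
def col1 {T M : ℕ} (X : Matrix (Fin T) (Fin M) ℂ) (l : Fin M) :
    Matrix (Fin T) (Fin 1) ℂ :=
  fun t _ => X t l

/-- The orthogonal projection `P_J = X_J ((X_J)ᴴ X_J)⁻¹ (X_J)ᴴ` onto the column
span of `X_J`. -/
noncomputable def projMat {T M : ℕ} (X : Matrix (Fin T) (Fin M) ℂ)
    (J : Finset (Fin M)) : Matrix (Fin T) (Fin T) ℂ :=
  cols X J * ((cols X J)ᴴ * cols X J)⁻¹ * (cols X J)ᴴ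

/-!
The residual `y = (I − P_J) X(l)` equals `X h`, where `h` has coefficient `1` at `l` and is
supported on `{l} ∪ J`, so the lower RIP bound gives `‖y‖² ≥ 1 − δ`. As `I − P_J` is an orthogonal
projection, `‖y‖² = X(l)ᴴ (I − P_J) X(l)` is an entry of the row `X(l)ᴴ (I − P_J) X_{Ω\J}`, and the
spectral norm dominates every entry. Finally `1 − δ ≥ (1 − 2δ)/(1 − δ)`, since `(1 − δ)² ≥ 1 − 2δ`.
-/

theorem submatrix_id_mulVec_eq_mulVec_extend {m n o R : Type*} [Fintype n] [Fintype o]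
    [NonUnitalNonAssocSemiring R] (A : Matrix m o R) {e : n → o} (he : Function.Injective e)
    (v : n → R) : A.submatrix id e *ᵥ v = A *ᵥ Function.extend e v 0 := by
  funext i
  simp only [mulVec, dotProduct, submatrix_apply, id]
  refine Fintype.sum_of_injective e he _ _ (fun j hj => ?_) fun j => ?_
  · rw [Function.extend_apply' _ _ _ hj, Pi.zero_apply, mul_zero]
  · rw [he.extend_apply]

theorem isStarProjection_mul_inv_mul_conjTranspose {m n R : Type*} [Fintype m] [Fintype n]
    [DecidableEq n] [CommRing R] [StarRing R] {A : Matrix m n R} (hA : IsUnit (Aᴴ * A)) :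
    IsStarProjection (A * (Aᴴ * A)⁻¹ * Aᴴ) where
  isIdempotentElem := by
    have hdet : IsUnit (Aᴴ * A).det := (isUnit_iff_isUnit_det _).1 hA
    calc A * (Aᴴ * A)⁻¹ * Aᴴ * (A * (Aᴴ * A)⁻¹ * Aᴴ)
        = A * ((Aᴴ * A)⁻¹ * (Aᴴ * A)) * (Aᴴ * A)⁻¹ * Aᴴ := by simp only [Matrix.mul_assoc]
      _ = A * (Aᴴ * A)⁻¹ * Aᴴ := by rw [nonsing_inv_mul _ hdet, Matrix.mul_one]
  isSelfAdjoint :=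
    isHermitian_mul_mul_conjTranspose A (isHermitian_conjTranspose_mul_self A).inv

theorem star_dotProduct_self_eq_sum_norm_sq {n 𝕜 : Type*} [Fintype n] [RCLike 𝕜] (v : n → 𝕜) :
    star v ⬝ᵥ v = ((∑ i, ‖v i‖ ^ 2 : ℝ) : 𝕜) := by
  simp only [dotProduct, Pi.star_apply, RCLike.star_def, RCLike.conj_mul, map_sum, map_pow]

theorem star_dotProduct_mulVec_of_isStarProjection {n R : Type*} [Fintype n]
    [NonUnitalSemiring R] [StarRing R] {Q : Matrix n n R} (hQ : IsStarProjection Q) (x : n → R) :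
    star x ⬝ᵥ (Q *ᵥ x) = star (Q *ᵥ x) ⬝ᵥ (Q *ᵥ x) := by
  have hadj : Qᴴ = Q := hQ.isSelfAdjoint
  rw [star_mulVec, hadj, ← dotProduct_mulVec, mulVec_mulVec, hQ.isIdempotentElem.eq]

theorem norm_apply_le_specNorm {m n : Type*} [Fintype m] [Fintype n] [DecidableEq n]
    (A : Matrix m n ℂ) (i : m) (j : n) : ‖A i j‖ ≤ specNorm A := by
  let L := LinearMap.toContinuousLinearMap (toEuclideanLin A)
  calc ‖A i j‖ = ‖L (EuclideanSpace.single j 1) i‖ := by simp [L, toLpLin_apply]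
    _ ≤ ‖L (EuclideanSpace.single j 1)‖ := PiLp.norm_apply_le _ i
    _ ≤ ‖L‖ * ‖EuclideanSpace.single j (1 : ℂ)‖ := L.le_opNorm _
    _ = specNorm A := by rw [PiLp.norm_single, norm_one, mul_one, specNorm]

theorem one_sub_two_mul_div_one_sub_le {K : Type*} [Field K] [LinearOrder K]
    [IsStrictOrderedRing K] {δ : K} (hδ : δ < 1) : (1 - 2 * δ) / (1 - δ) ≤ 1 - δ := by
  rw [div_le_iff₀ (sub_pos.2 hδ)]
  linarith [sq_nonneg δ]

namespace RIP

variable {T M k : ℕ} {X : Matrix (Fin T) (Fin M) ℂ} {δ : ℝ} {J : Finset (Fin M)}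

theorem one_sub_mul_norm_apply_sq_le (hX : RIP X k δ) {S : Finset (Fin M)} (hS : S.card ≤ k)
    {h : Fin M → ℂ} (hh : ∀ i ∉ S, h i = 0) (i : Fin M) :
    (1 - δ) * ‖h i‖ ^ 2 ≤ ∑ t, ‖(X *ᵥ h) t‖ ^ 2 := by
  obtain ⟨-, hδ, hbound⟩ := hX
  have hsupp : (Finset.univ.filter fun i => h i ≠ 0) ⊆ S := fun i hi =>
    not_imp_comm.1 (hh i) (Finset.mem_filter.1 hi).2
  calc (1 - δ) * ‖h i‖ ^ 2 ≤ (1 - δ) * ∑ i, ‖h i‖ ^ 2 := by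
        refine mul_le_mul_of_nonneg_left ?_ (sub_nonneg.2 hδ.le)
        exact Finset.single_le_sum (f := fun i => ‖h i‖ ^ 2) (fun _ _ => sq_nonneg _)
          (Finset.mem_univ i)
    _ ≤ ∑ t, ‖(X *ᵥ h) t‖ ^ 2 := (hbound h ((Finset.card_le_card hsupp).trans hS)).1

theorem cols_mulVec_injective (hX : RIP X k δ) (hJ : J.card ≤ k) :
    Function.Injective (cols X J).mulVec := by
  refine (injective_iff_map_eq_zero (cols X J).mulVecLin).2 fun v hv => funext fun j => ?_
  have hzero : X *ᵥ Function.extend Subtype.val v 0 = 0 :=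
    (submatrix_id_mulVec_eq_mulVec_extend X Subtype.val_injective v).symm.trans hv
  have hle := hX.one_sub_mul_norm_apply_sq_le hJ (h := Function.extend Subtype.val v 0)
    (fun _ => Function.extend_val_apply') j
  rw [hzero, Subtype.val_injective.extend_apply] at hle
  simp only [Pi.zero_apply, norm_zero, ne_eq, OfNat.ofNat_ne_zero, not_false_eq_true, zero_pow,
    Finset.sum_const_zero] at hle
  have hsq : ‖v j‖ ^ 2 ≤ 0 := nonpos_of_mul_nonpos_right hle (sub_pos.2 hX.2.1)
  exact norm_eq_zero.1 ((sq_nonpos_iff _).1 hsq)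

open scoped ComplexOrder in
theorem isUnit_conjTranspose_cols_mul_cols (hX : RIP X k δ) (hJ : J.card ≤ k) :
    IsUnit ((cols X J)ᴴ * cols X J) :=
  (PosDef.conjTranspose_mul_self _ (hX.cols_mulVec_injective hJ)).isUnit

theorem one_sub_le_sum_norm_sq_col_sub_cols_mulVec (hX : RIP X k δ) (hJ : J.card < k)
    {l : Fin M} (hl : l ∉ J) (c : J → ℂ) :
    1 - δ ≤ ∑ t, ‖(X.col l - cols X J *ᵥ c) t‖ ^ 2 := by
  let g : Fin M → ℂ := Function.extend Subtype.val c 0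
  have hg : ∀ i ∉ J, g i = 0 := fun _ => Function.extend_val_apply'
  let h : Fin M → ℂ := Pi.single l 1 - g
  have hXh : X *ᵥ h = X.col l - cols X J *ᵥ c := by
    rw [mulVec_sub, mulVec_single_one, cols,
      submatrix_id_mulVec_eq_mulVec_extend X Subtype.val_injective]
  have hhl : h l = 1 := by simp [h, hg l hl]
  have hsupp : ∀ i ∉ insert l J, h i = 0 := fun i hi => by
    obtain ⟨hil, hiJ⟩ := not_or.1 (Finset.mem_insert.not.1 hi)
    simp [h, hg i hiJ, hil]
  have hcard : (insert l J).card ≤ k := (Finset.card_insert_le l J).trans hJ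
  simpa only [hhl, hXh, norm_one, one_pow, mul_one] using
    hX.one_sub_mul_norm_apply_sq_le hcard hsupp l

end RIP

theorem specNorm_col_proj_ge_general
    {T M : ℕ} {X : Matrix (Fin T) (Fin M) ℂ} {k : ℕ} {δ : ℝ} (hX : RIP X k δ)
    {J K : Finset (Fin M)} (hJ : J.card < k) {l : Fin M} (hlJ : l ∉ J) (hlK : l ∈ K) :
    IsUnit ((cols X J)ᴴ * cols X J) ∧
      1 - δ ≤ specNorm ((col1 X l)ᴴ * (1 - projMat X J) * cols X K) := by
  have hunit := hX.isUnit_conjTranspose_cols_mul_cols hJ.le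
  refine ⟨hunit, ?_⟩
  set Q := 1 - projMat X J with hQ
  have hproj : IsStarProjection Q := (isStarProjection_mul_inv_mul_conjTranspose hunit).one_sub
  have hres : Q *ᵥ X.col l =
      X.col l - cols X J *ᵥ (((cols X J)ᴴ * cols X J)⁻¹ *ᵥ (cols X J)ᴴ *ᵥ X.col l) := by
    simp only [hQ, projMat, sub_mulVec, one_mulVec, mulVec_mulVec, Matrix.mul_assoc]
  have hentry : ((col1 X l)ᴴ * Q * cols X K) 0 ⟨l, hlK⟩ =
      ((∑ t, ‖(Q *ᵥ X.col l) t‖ ^ 2 : ℝ) : ℂ) := by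
    rw [Matrix.mul_assoc]
    exact (star_dotProduct_mulVec_of_isStarProjection hproj (X.col l)).trans
      (star_dotProduct_self_eq_sum_norm_sq _)
  calc 1 - δ ≤ ∑ t, ‖(Q *ᵥ X.col l) t‖ ^ 2 := by
        rw [hres]
        exact hX.one_sub_le_sum_norm_sq_col_sub_cols_mulVec hJ hlJ _
    _ = ‖((col1 X l)ᴴ * Q * cols X K) 0 ⟨l, hlK⟩‖ := by
        rw [hentry, Complex.norm_of_nonneg (by positivity)]
    _ ≤ specNorm ((col1 X l)ᴴ * Q * cols X K) := norm_apply_le_specNorm _ _ _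

/-- Inequality (derivation_3) in Appendix B: if `X` satisfies the RIP of orders `1`
and `s` with constants `0 ≤ δ₁ ≤ δ_s < 1/2`, `|Ω| ≤ s`, `J ⊊ Ω` and `l ∈ Ω \ J`,
then `‖X(l)ᴴ (I − P_J) X_{Ω\J}‖ ≥ (1 − 2δ_s)/(1 − δ_s)`, the Gram matrix
`(X_J)ᴴ X_J` being invertible so that `P_J` is well defined. -/
theorem specNorm_col_proj_ge
    {T M : ℕ} (X : Matrix (Fin T) (Fin M) ℂ) (s : ℕ) (δ₁ δs : ℝ)
    (hX1 : RIP X 1 δ₁) (hXs : RIP X s δs) (hδ : δ₁ ≤ δs) (hδs : δs < 1 / 2)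
    (Ω J : Finset (Fin M)) (hΩ : Ω.card ≤ s) (hJ : J ⊂ Ω)
    (l : Fin M) (hl : l ∈ Ω \ J) :
    IsUnit ((cols X J)ᴴ * cols X J) ∧
      (1 - 2 * δs) / (1 - δs) ≤
        specNorm ((col1 X l)ᴴ * ((1 : Matrix (Fin T) (Fin T) ℂ) - projMat X J) *
          cols X (Ω \ J)) := by
  have hJs : J.card < s := (Finset.card_lt_card hJ).trans_le hΩ
  exact (specNorm_col_proj_ge_general hXs hJs (Finset.mem_sdiff.1 hl).2 hl).imp_right
    (one_sub_two_mul_div_one_sub_le hXs.2.1).trans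
end

section
/- Let X ∈ ℂ^{T×M} satisfy the RIP of order s with constant δ_s ∈ [0,1) and of order 2s with constant δ_{2s} ∈ [0,1). Let Ω₁, Ω₂ ⊆ {1,…,M} be disjoint index sets with |Ω₁| ≤ s and |Ω₁ ∪ Ω₂| ≤ 2s. Then, with X_{Ω₁}^† = ((X_{Ω₁})^H X_{Ω₁})^{−1} (X_{Ω₁})^H (well defined since (X_{Ω₁})^H X_{Ω₁} is invertible), the spectral norm satisfies ‖X_{Ω₁}^† X_{Ω₂}‖ ≤ δ_{2s}/(1 − δ_s). -/
open Matrix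

/-!
The RIP of order `k` says that the Gram matrix `X_Jᴴ X_J` of any `k` columns is within `δ` of the
identity: the difference is Hermitian, so its norm is the supremum of its Rayleigh quotient. For
disjoint `Ω₁`, `Ω₂` the matrix `X_{Ω₁}ᴴ X_{Ω₂}` is an off-diagonal block of
`X_{Ω₁ ∪ Ω₂}ᴴ X_{Ω₁ ∪ Ω₂} - 1`, hence has norm at most `δ_{2s}`; multiplying by the inverse of a
Gram matrix within `δ_s` of the identity increases the norm at most by the factor `1 / (1 - δ_s)`.
-/

open scoped Matrix.Norms.L2Operator

lemma isUnit_of_norm_sub_one_lt_one {R : Type*} [NormedRing R] [HasSummableGeomSeries R] {a : R}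
    (ha : ‖a - 1‖ < 1) : IsUnit a := by
  rw [norm_sub_rev] at ha
  simpa using isUnit_one_sub_of_norm_lt_one ha

section L2OpNorm

variable {𝕜 : Type*} [RCLike 𝕜]

lemma opNorm_le_of_abs_reApplyInnerSelf_le {E : Type*} [NormedAddCommGroup E]
    [InnerProductSpace 𝕜 E] {T : E →L[𝕜] E} (hT : T.IsSymmetric) {c : ℝ} (hc : 0 ≤ c)
    (h : ∀ x, |T.reApplyInnerSelf x| ≤ c * ‖x‖ ^ 2) : ‖T‖ ≤ c := by
  rw [T.norm_eq_iSup_rayleighQuotient hT]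
  refine ciSup_le fun x => ?_
  rw [ContinuousLinearMap.rayleighQuotient, abs_div, abs_sq]
  exact div_le_of_le_mul₀ (sq_nonneg _) hc (h x)

variable {l m n p : Type*} [Fintype l] [Fintype m] [Fintype n] [Fintype p]

lemma l2_opNorm_conjTranspose_mul_self_sub_one_le [DecidableEq n] {A : Matrix m n 𝕜} {δ : ℝ}
    (hδ : 0 ≤ δ)
    (hA : ∀ v : n → 𝕜, |∑ j, ‖(A *ᵥ v) j‖ ^ 2 - ∑ i, ‖v i‖ ^ 2| ≤ δ * ∑ i, ‖v i‖ ^ 2) :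
    ‖Aᴴ * A - 1‖ ≤ δ := by
  have hherm : (Aᴴ * A - 1).IsHermitian :=
    (isHermitian_conjTranspose_mul_self A).sub isHermitian_one
  rw [cstar_norm_def]
  refine opNorm_le_of_abs_reApplyInnerSelf_le (isSymmetric_toEuclideanLin_iff.2 hherm) hδ
    fun x => ?_
  have hquad : (toEuclideanCLM (𝕜 := 𝕜) (Aᴴ * A - 1)).reApplyInnerSelf x =
      ∑ j, ‖(A *ᵥ x.ofLp) j‖ ^ 2 - ∑ i, ‖x i‖ ^ 2 := by
    rw [ContinuousLinearMap.reApplyInnerSelf_apply, inner_re_symm,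
      EuclideanSpace.inner_eq_star_dotProduct, ofLp_toEuclideanCLM, sub_mulVec, one_mulVec,
      sub_dotProduct, ← mulVec_mulVec, dotProduct_comm, dotProduct_mulVec, ← star_mulVec]
    simp [dotProduct, RCLike.norm_sq_eq_def]
  rw [hquad, EuclideanSpace.norm_sq_eq]
  exact hA x.ofLp

lemma l2_opNorm_one_submatrix_le_one [DecidableEq m] [DecidableEq n] {f : n → m}
    (hf : f.Injective) : ‖(1 : Matrix m m 𝕜).submatrix id f‖ ≤ 1 := by
  have hgram : ((1 : Matrix m m 𝕜).submatrix id f)ᴴ * (1 : Matrix m m 𝕜).submatrix id f = 1 := by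
    rw [conjTranspose_submatrix, conjTranspose_one, ← submatrix_mul _ _ _ _ _ Function.bijective_id,
      one_mul, submatrix_one _ hf]
  have hone : ‖(1 : Matrix n n 𝕜)‖ ≤ 1 := by
    rw [← diagonal_one, l2_opNorm_diagonal]
    exact (pi_norm_const_le (1 : 𝕜)).trans_eq norm_one
  rw [← hgram, l2_opNorm_conjTranspose_mul_self] at hone
  exact (abs_le_one_iff_mul_self_le_one.2 hone).trans' (le_abs_self _)

lemma l2_opNorm_submatrix_le [DecidableEq n] [DecidableEq p]
    (A : Matrix m n 𝕜) {f : l → m} {g : p → n} (hf : f.Injective) (hg : g.Injective) :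
    ‖A.submatrix f g‖ ≤ ‖A‖ := by
  classical
  have hfactor : A.submatrix f g =
      ((1 : Matrix m m 𝕜).submatrix id f)ᴴ * (A * (1 : Matrix n n 𝕜).submatrix id g) := by
    rw [← submatrix_id_id A, ← submatrix_mul A 1 id id g Function.bijective_id,
      conjTranspose_submatrix, conjTranspose_one,
      ← submatrix_mul 1 (A * 1) f id g Function.bijective_id, submatrix_id_id, Matrix.one_mul,
      Matrix.mul_one]
  calc ‖A.submatrix f g‖
      ≤ ‖(1 : Matrix m m 𝕜).submatrix id f‖ * (‖A‖ * ‖(1 : Matrix n n 𝕜).submatrix id g‖) := by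
        rw [hfactor, ← l2_opNorm_conjTranspose ((1 : Matrix m m 𝕜).submatrix id f)]
        grw [l2_opNorm_mul, l2_opNorm_mul]
    _ ≤ ‖A‖ := by
        grw [l2_opNorm_one_submatrix_le_one hf, l2_opNorm_one_submatrix_le_one hg, one_mul, mul_one]

lemma l2_opNorm_conjTranspose_submatrix_mul_submatrix_le [DecidableEq n] [DecidableEq p]
    (A : Matrix m n 𝕜) {f : l → n} {g : p → n} (hf : f.Injective) (hg : g.Injective)
    (hfg : ∀ i j, f i ≠ g j) :
    ‖(A.submatrix id f)ᴴ * A.submatrix id g‖ ≤ ‖Aᴴ * A - 1‖ := by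
  have hblock : (A.submatrix id f)ᴴ * A.submatrix id g = (Aᴴ * A - 1).submatrix f g := by
    ext i j
    rw [conjTranspose_submatrix, ← submatrix_mul _ _ _ _ _ Function.bijective_id]
    simp [one_apply_ne (hfg i j)]
  exact hblock ▸ l2_opNorm_submatrix_le _ hf hg

lemma l2_opNorm_inv_mul_le [DecidableEq n] [DecidableEq p] {G : Matrix n n 𝕜} {δ : ℝ} (hδ : δ < 1)
    (hG : ‖G - 1‖ ≤ δ) (C : Matrix n p 𝕜) : ‖G⁻¹ * C‖ ≤ ‖C‖ / (1 - δ) := by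
  have hunit : IsUnit G.det := (isUnit_iff_isUnit_det G).1
    (isUnit_of_norm_sub_one_lt_one (hG.trans_lt hδ))
  have hfix : G⁻¹ * C = C - (G - 1) * (G⁻¹ * C) := by
    rw [Matrix.sub_mul, mul_nonsing_inv_cancel_left _ _ hunit, Matrix.one_mul, sub_sub_cancel]
  have hbound : ‖G⁻¹ * C‖ ≤ ‖C‖ + δ * ‖G⁻¹ * C‖ :=
    calc ‖G⁻¹ * C‖ = ‖C - (G - 1) * (G⁻¹ * C)‖ := congrArg _ hfix
      _ ≤ ‖C‖ + ‖(G - 1) * (G⁻¹ * C)‖ := norm_sub_le _ _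
      _ ≤ ‖C‖ + δ * ‖G⁻¹ * C‖ := by grw [l2_opNorm_mul, hG]
  rw [le_div_iff₀ (sub_pos.2 hδ)]
  linarith

end L2OpNorm

lemma specNorm_eq_l2_opNorm {m n : Type*} [Fintype m] [Fintype n] [DecidableEq n]
    (A : Matrix m n ℂ) : specNorm A = ‖A‖ := rfl

lemma submatrix_mulVec_eq_mulVec_extend {R l m n : Type*} [NonUnitalNonAssocSemiring R]
    [Fintype m] [Fintype n] (A : Matrix l m R) {f : n → m} (hf : f.Injective) (v : n → R) :
    A.submatrix id f *ᵥ v = A *ᵥ Function.extend f v 0 := by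
  ext i
  refine Fintype.sum_of_injective f hf _ _ (fun j hj => ?_) fun j => ?_
  · simp [Function.extend_apply' _ _ _ hj]
  · simp [hf.extend_apply]

lemma sum_norm_sq_extend_zero {E m n : Type*} [SeminormedAddCommGroup E] [Fintype m] [Fintype n]
    {f : n → m} (hf : f.Injective) (v : n → E) :
    ∑ i, ‖Function.extend f v 0 i‖ ^ 2 = ∑ j, ‖v j‖ ^ 2 := by
  refine (Fintype.sum_of_injective f hf _ _ (fun i hi => ?_) fun j => ?_).symm
  · simp [Function.extend_apply' _ _ _ hi]
  · simp [hf.extend_apply]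

namespace RIP

variable {T M k : ℕ} {X : Matrix (Fin T) (Fin M) ℂ} {δ : ℝ}

lemma abs_sum_norm_sq_cols_mulVec_sub_le (hX : RIP X k δ) {J : Finset (Fin M)} (hJ : J.card ≤ k)
    (v : J → ℂ) :
    |∑ i, ‖(cols X J *ᵥ v) i‖ ^ 2 - ∑ j, ‖v j‖ ^ 2| ≤ δ * ∑ j, ‖v j‖ ^ 2 := by
  have hsupp : (Finset.univ.filter fun i => Function.extend ((↑) : J → Fin M) v 0 i ≠ 0) ⊆ J := by
    intro i hi
    contrapose! hi
    simp [Function.extend_apply' _ _ _ (show ¬∃ j : J, (j : Fin M) = i by simpa using hi)]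
  have hiso := hX.2.2 _ ((Finset.card_le_card hsupp).trans hJ)
  rw [← submatrix_mulVec_eq_mulVec_extend X Subtype.val_injective,
    sum_norm_sq_extend_zero Subtype.val_injective, ← cols] at hiso
  rw [abs_le]
  constructor <;> linarith

lemma l2_opNorm_gram_sub_one_le (hX : RIP X k δ) {J : Finset (Fin M)} (hJ : J.card ≤ k) :
    ‖(cols X J)ᴴ * cols X J - 1‖ ≤ δ :=
  l2_opNorm_conjTranspose_mul_self_sub_one_le hX.1 (hX.abs_sum_norm_sq_cols_mulVec_sub_le hJ)

lemma l2_opNorm_conjTranspose_mul_le_of_disjoint (hX : RIP X k δ) {J K : Finset (Fin M)}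
    (hJK : Disjoint J K) (hcard : (J ∪ K).card ≤ k) : ‖(cols X J)ᴴ * cols X K‖ ≤ δ := by
  have hne (i : J) (j : K) : Set.inclusion (Finset.subset_union_left (s₂ := K)) i ≠
      Set.inclusion (Finset.subset_union_right (s₁ := J)) j := fun hij =>
    Finset.disjoint_left.1 hJK i.2 (congrArg Subtype.val hij ▸ j.2)
  exact (l2_opNorm_conjTranspose_submatrix_mul_submatrix_le (cols X (J ∪ K))
    (Set.inclusion_injective _) (Set.inclusion_injective _) hne).trans
    (hX.l2_opNorm_gram_sub_one_le hcard)

end RIP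

theorem specNorm_pseudoinverse_mul_le_general
    {T M : ℕ} (X : Matrix (Fin T) (Fin M) ℂ) (s k : ℕ) (δs δk : ℝ)
    (hXs : RIP X s δs) (hXk : RIP X k δk)
    (Ω₁ Ω₂ : Finset (Fin M)) (hdisj : Disjoint Ω₁ Ω₂)
    (h₁ : Ω₁.card ≤ s) (h₁₂ : (Ω₁ ∪ Ω₂).card ≤ k) :
    IsUnit ((cols X Ω₁)ᴴ * cols X Ω₁) ∧
      specNorm ((((cols X Ω₁)ᴴ * cols X Ω₁)⁻¹ * (cols X Ω₁)ᴴ) * cols X Ω₂) ≤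
        δk / (1 - δs) := by
  have hδs : δs < 1 := hXs.2.1
  have hgram : ‖(cols X Ω₁)ᴴ * cols X Ω₁ - 1‖ ≤ δs := hXs.l2_opNorm_gram_sub_one_le h₁
  have hcross : ‖(cols X Ω₁)ᴴ * cols X Ω₂‖ ≤ δk :=
    hXk.l2_opNorm_conjTranspose_mul_le_of_disjoint hdisj h₁₂
  refine ⟨isUnit_of_norm_sub_one_lt_one (hgram.trans_lt hδs), ?_⟩
  rw [specNorm_eq_l2_opNorm, Matrix.mul_assoc]
  exact (l2_opNorm_inv_mul_le hδs hgram _).trans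
    (div_le_div_of_nonneg_right hcross (sub_nonneg.2 hδs.le))

/-- Bound used in Appendix D: if `X` satisfies the RIP of orders `s` and `2s` with
constants `δ_s, δ_{2s} ∈ [0,1)` and `Ω₁, Ω₂` are disjoint with `|Ω₁| ≤ s` and
`|Ω₁ ∪ Ω₂| ≤ 2s`, then with `X_{Ω₁}^† = ((X_{Ω₁})ᴴ X_{Ω₁})⁻¹ (X_{Ω₁})ᴴ`
(well defined since the Gram matrix is invertible),
`‖X_{Ω₁}^† X_{Ω₂}‖ ≤ δ_{2s}/(1 − δ_s)`. -/
theorem specNorm_pseudoinverse_mul_le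
    {T M : ℕ} (X : Matrix (Fin T) (Fin M) ℂ) (s : ℕ) (δs δ2s : ℝ)
    (hXs : RIP X s δs) (hX2s : RIP X (2 * s) δ2s)
    (Ω₁ Ω₂ : Finset (Fin M)) (hdisj : Disjoint Ω₁ Ω₂)
    (h₁ : Ω₁.card ≤ s) (h₁₂ : (Ω₁ ∪ Ω₂).card ≤ 2 * s) :
    IsUnit ((cols X Ω₁)ᴴ * cols X Ω₁) ∧
      specNorm ((((cols X Ω₁)ᴴ * cols X Ω₁)⁻¹ * (cols X Ω₁)ᴴ) * cols X Ω₂) ≤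
        δ2s / (1 - δs) :=
  specNorm_pseudoinverse_mul_le_general X s (2 * s) δs δ2s hXs hX2s Ω₁ Ω₂ hdisj h₁ h₁₂
end

section
/- Let γ and p be reals with 0 ≤ γ < 1 and 0 < p < (1−γ)/2. Then R_K := ((1−γ)/2)·ln( (1−p)(1−γ) / (p(1+γ)) ) − ln( 2(1−p)/(1+γ) ) > 0. -/
/-!
With `q = (1 - γ) / 2` the rate `R_K` is the relative entropy `D(q ‖ p)` of the Bernoulli laws
with parameters `q` and `p`, so it is positive as soon as `q ≠ p`, by Gibbs' inequality. The latter
is the pointwise bound `q - p ≤ q log (q / p)`, with equality only for `q = p`, summed over the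
two outcomes: the left-hand sides cancel.
-/

open Real Set InformationTheory

/-- The relative entropy (Kullback–Leibler divergence, in nats) of the Bernoulli law with
parameter `q` from the one with parameter `p`. It is real-valued, so it is meaningful only for
`0 ≤ q ≤ 1` and `0 < p < 1`; at `p = 0` and `p = 1` the junk value of `x / 0` replaces the
usual `∞`. -/
noncomputable def binKLDiv (q p : ℝ) : ℝ :=
  q * log (q / p) + (1 - q) * log ((1 - q) / (1 - p))

lemma sub_lt_mul_log_div {x y : ℝ} (hx : 0 ≤ x) (hy : 0 < y) (hxy : x ≠ y) :
    x - y < x * log (x / y) := by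
  have h_nonneg : 0 ≤ x / y := by positivity
  have h_ne : klFun (x / y) ≠ 0 := by
    rwa [Ne, klFun_eq_zero_iff h_nonneg, div_eq_one_iff_eq hy.ne']
  have h_pos : 0 < y * klFun (x / y) :=
    mul_pos hy ((klFun_nonneg h_nonneg).lt_of_ne' h_ne)
  have h_eq : y * klFun (x / y) = x * log (x / y) - (x - y) := by
    rw [klFun_apply]
    field_simp
    ring
  linarith

lemma binKLDiv_pos {q p : ℝ} (hq : q ∈ Icc 0 1) (hp : p ∈ Ioo 0 1) (hqp : q ≠ p) :
    0 < binKLDiv q p := by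
  have h_success : q - p < q * log (q / p) := sub_lt_mul_log_div hq.1 hp.1 hqp
  have h_failure : (1 - q) - (1 - p) < (1 - q) * log ((1 - q) / (1 - p)) :=
    sub_lt_mul_log_div (sub_nonneg.2 hq.2) (sub_pos.2 hp.2) (sub_right_injective.ne hqp)
  unfold binKLDiv
  linarith

lemma binKLDiv_eq_mul_log_odds_ratio_sub_log {q p : ℝ} (hq0 : q ≠ 0) (hq1 : q ≠ 1)
    (hp0 : p ≠ 0) (hp1 : p ≠ 1) :
    binKLDiv q p = q * log ((1 - p) * q / (p * (1 - q))) - log ((1 - p) / (1 - q)) := by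
  have hq1' : 1 - q ≠ 0 := sub_ne_zero.2 hq1.symm
  have hp1' : 1 - p ≠ 0 := sub_ne_zero.2 hp1.symm
  have h_odds : (1 - p) * q / (p * (1 - q)) = q / p * ((1 - p) / (1 - q)) := by
    field_simp
  have h_inv : log ((1 - q) / (1 - p)) = -log ((1 - p) / (1 - q)) := by
    rw [← log_inv, inv_div]
  rw [binKLDiv, h_odds, log_mul (div_ne_zero hq0 hp0) (div_ne_zero hp1' hq1'), h_inv]
  ring

lemma rate_RK_eq_binKLDiv {γ p : ℝ} (hγ_neg_one : γ ≠ -1) (hγ_one : γ ≠ 1)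
    (hp0 : p ≠ 0) (hp1 : p ≠ 1) :
    (1 - γ) / 2 * log ((1 - p) * (1 - γ) / (p * (1 + γ))) - log (2 * (1 - p) / (1 + γ)) =
      binKLDiv ((1 - γ) / 2) p := by
  have hq0 : (1 - γ) / 2 ≠ 0 := by grind
  have hq1 : (1 - γ) / 2 ≠ 1 := by grind
  have h_compl : 1 - (1 - γ) / 2 = (1 + γ) / 2 := by ring
  have h_odds : (1 - p) * ((1 - γ) / 2) / (p * ((1 + γ) / 2)) =
      (1 - p) * (1 - γ) / (p * (1 + γ)) := by
    rw [← mul_div_assoc, ← mul_div_assoc, div_div_div_cancel_right₀ two_ne_zero]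
  have h_ratio : (1 - p) / ((1 + γ) / 2) = 2 * (1 - p) / (1 + γ) := by
    rw [div_div_eq_mul_div, mul_comm]
  rw [binKLDiv_eq_mul_log_odds_ratio_sub_log hq0 hq1 hp0 hp1, h_compl, h_odds, h_ratio]

theorem rate_RK_pos_general {γ p : ℝ} (hγ : γ ∈ Ioo (-1) 1) (hp : p ∈ Ioo 0 1)
    (hne : p ≠ (1 - γ) / 2) :
    0 < (1 - γ) / 2 * log ((1 - p) * (1 - γ) / (p * (1 + γ))) - log (2 * (1 - p) / (1 + γ)) := by
  have hq : (1 - γ) / 2 ∈ Icc 0 1 := ⟨by linarith [hγ.2], by linarith [hγ.1]⟩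
  rw [rate_RK_eq_binKLDiv hγ.1.ne' hγ.2.ne hp.1.ne' hp.2.ne]
  exact binKLDiv_pos hq hp hne.symm

/-- Positivity of the exponential decay rate `R_K` in Corollary 2 (equation
(asymptotic_i)): for `0 ≤ γ < 1` and `0 < p < (1−γ)/2`,
`R_K = ((1−γ)/2)·ln((1−p)(1−γ)/(p(1+γ))) − ln(2(1−p)/(1+γ)) > 0`. -/
theorem rate_RK_pos (γ p : ℝ) (hγ0 : 0 ≤ γ) (hγ1 : γ < 1)
    (hp0 : 0 < p) (hp : p < (1 - γ) / 2) :
    0 < (1 - γ) / 2 * Real.log ((1 - p) * (1 - γ) / (p * (1 + γ))) -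
      Real.log (2 * (1 - p) / (1 + γ)) :=
  rate_RK_pos_general ⟨by linarith, hγ1⟩ ⟨hp0, by linarith⟩ hp.ne
end
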